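/- Let H be a finite-dimensional complex inner product space, N ∈ ℕ, let X_1,…,X_N be pairwise commuting binary observables on H and Z_1,…,Z_N be pairwise commuting binary observables on H. Then the extraction map preserves norms: for every ψ ∈ H, the extracted global vector Φ := 2^{−N} Σ_{r,s ∈ {0,1}^N} (X(r)Z(s) ⊗ σx(r)σz(s) ⊗ Id_{Q_N})(ψ ⊗ φ+_N) satisfies ‖Φ‖ = ‖ψ‖. -/

import Mathlib

open scoped Matrix Kronecker ComplexConjugate

noncomputable section

/-- Bit vectors of length `N`, i.e. elements of `{0,1}^N`. -/
abbrev BV (N : ℕ) := Fin N → Bool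

/-- The space `Q_N` of functions `{0,1}^N → ℂ`. -/
abbrev QV (N : ℕ) := BV N → ℂ

/-- Linear operators on `Q_N`, represented as matrices in the standard basis. -/
abbrev QOp (N : ℕ) := Matrix (BV N) (BV N) ℂ

/-- Bitwise XOR of bit vectors. -/
def bvXor {N : ℕ} (x r : BV N) : BV N := fun i => xor (x i) (r i)

/-- The sign `(-1)^{s·x}` where `s·x = Σ_i s_i x_i mod 2`. -/
def bSign {N : ℕ} (s x : BV N) : ℂ :=
  (-1 : ℂ) ^ (Finset.univ.filter fun i => s i = true ∧ x i = true).card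

/-- The standard basis vector `e_x` of `Q_N`. -/
def eVec {N : ℕ} (x : BV N) : QV N := fun y => if y = x then 1 else 0

/-- Tensor product of two vectors (as functions). -/
def tensVec {α β : Type*} (f : α → ℂ) (g : β → ℂ) : α × β → ℂ := fun p => f p.1 * g p.2

/-- The Pauli parity operator `σx(r)`, sending `e_x` to `e_{x ⊕ r}`. -/
def sigmaX {N : ℕ} (r : BV N) : QOp N :=
  Matrix.of fun y x => if y = bvXor x r then 1 else 0

/-- The Pauli parity operator `σz(s)`, sending `e_x` to `(-1)^{s·x} e_x`. -/
def sigmaZ {N : ℕ} (s : BV N) : QOp N :=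
  Matrix.diagonal fun x => bSign s x

/-- The scalar `2^{-N/2}`. -/
def invSqrt2pow (N : ℕ) : ℂ := (((Real.sqrt 2)⁻¹ : ℝ) : ℂ) ^ N

/-- The maximally entangled state `φ⁺_N = 2^{-N/2} Σ_x e_x ⊗ e_x`. -/
def phiPlus (N : ℕ) : BV N × BV N → ℂ :=
  invSqrt2pow N • ∑ x : BV N, tensVec (eVec x) (eVec x)

/-- The standard (complex) inner product on a finite function space. -/
def qInner {α : Type*} [Fintype α] (f g : α → ℂ) : ℂ :=
  ∑ x, (starRingEnd ℂ) (f x) * g x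

/-- The norm associated to `qInner`. -/
def qNorm {α : Type*} [Fintype α] (f : α → ℂ) : ℝ :=
  Real.sqrt (qInner f f).re

/-- A binary observable: a self-adjoint operator squaring to the identity. -/
def IsBinaryObs {ι : Type*} [Fintype ι] [DecidableEq ι] (O : Matrix ι ι ℂ) : Prop :=
  O.IsHermitian ∧ O * O = 1

/-- For pairwise commuting operators `X i`, the parity product `X(r) = ∏_{i : r_i = 1} X_i`. -/
def obsProd {n : ℕ} {ι : Type*} [Fintype ι] [DecidableEq ι]
    (X : Fin n → Matrix ι ι ℂ) (hX : ∀ i j, Commute (X i) (X j)) (r : BV n) :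
    Matrix ι ι ℂ :=
  (Finset.univ.filter fun i => r i = true).noncommProd X fun i _ j _ _ => hX i j

/-- The set of bit vectors supported on `R`. -/
def suppSet {N : ℕ} (R : Finset (Fin N)) : Finset (BV N) :=
  Finset.univ.filter fun u => ∀ i, u i = true → i ∈ R

/-- The projector `Π^{σx}_u = 2^{-|R|} Σ_{u' supported on R} (-1)^{u·u'} σx(u')`. -/
def projPauliX {N : ℕ} (R : Finset (Fin N)) (u : BV N) : QOp N :=
  ((2 : ℂ) ^ R.card)⁻¹ • ∑ u' ∈ suppSet R, bSign u u' • sigmaX u'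

/-- The projector `Π^{σz}_v = 2^{-|S|} Σ_{v' supported on S} (-1)^{v·v'} σz(v')`. -/
def projPauliZ {N : ℕ} (S : Finset (Fin N)) (v : BV N) : QOp N :=
  ((2 : ℂ) ^ S.card)⁻¹ • ∑ v' ∈ suppSet S, bSign v v' • sigmaZ v'

/-- The projector `Π^X_u = 2^{-|R|} Σ_{u' supported on R} (-1)^{u·u'} X(u')`
for a family of commuting binary observables. -/
def projObs {N : ℕ} {ι : Type*} [Fintype ι] [DecidableEq ι]
    (X : Fin N → Matrix ι ι ℂ) (hX : ∀ i j, Commute (X i) (X j))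
    (R : Finset (Fin N)) (u : BV N) : Matrix ι ι ℂ :=
  ((2 : ℂ) ^ R.card)⁻¹ • ∑ u' ∈ suppSet R, bSign u u' • obsProd X hX u'

/-- The extracted global vector
`Φ = 2^{-N} Σ_{r,s} (X(r)Z(s) ⊗ σx(r)σz(s) ⊗ Id)(ψ ⊗ φ⁺_N)`. -/
def extractedVec {N : ℕ} {ι : Type*} [Fintype ι] [DecidableEq ι]
    (X Z : Fin N → Matrix ι ι ℂ)
    (hX : ∀ i j, Commute (X i) (X j)) (hZ : ∀ i j, Commute (Z i) (Z j))
    (ψ : ι → ℂ) : ι × BV N × BV N → ℂ :=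
  ((2 : ℂ) ^ N)⁻¹ • ∑ r : BV N, ∑ s : BV N,
    ((obsProd X hX r * obsProd Z hZ s) ⊗ₖ ((sigmaX r * sigmaZ s) ⊗ₖ (1 : QOp N))).mulVec
      (tensVec ψ (phiPlus N))

/-!
The generalised Bell states `(σx(r)σz(s) ⊗ 1) φ⁺` are orthonormal: since
`⟨(A ⊗ 1) φ⁺, (B ⊗ 1) φ⁺⟩ = 2^{-N} tr (Aᴴ B)`, this amounts to the trace orthogonality of the Pauli
operators. Hence `Φ` is `2^{-N}` times a sum of `4^N` pairwise orthogonal vectors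
`X(r)Z(s)ψ ⊗ (σx(r)σz(s) ⊗ 1) φ⁺`, each of norm `‖ψ‖` because `X(r)Z(s)` is unitary.
-/

section InnerProduct

variable {α β : Type*} [Fintype α] [Fintype β]

lemma qInner_eq_dotProduct (f g : α → ℂ) : qInner f g = star f ⬝ᵥ g := rfl

lemma qInner_smul_smul (a b : ℂ) (f g : α → ℂ) :
    qInner (a • f) (b • g) = star a * b * qInner f g := by
  simp only [qInner_eq_dotProduct, star_smul, smul_dotProduct, dotProduct_smul, smul_eq_mul,
    mul_assoc, mul_left_comm b]

lemma qInner_sum_sum {κ μ : Type*} (s : Finset κ) (t : Finset μ) (f : κ → α → ℂ)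
    (g : μ → α → ℂ) :
    qInner (∑ k ∈ s, f k) (∑ l ∈ t, g l) = ∑ k ∈ s, ∑ l ∈ t, qInner (f k) (g l) := by
  rw [qInner_eq_dotProduct, star_sum, sum_dotProduct]
  simp only [dotProduct_sum, qInner_eq_dotProduct]

lemma qInner_mulVec_mulVec [DecidableEq α] {U : Matrix α α ℂ} (hU : U ∈ Matrix.unitaryGroup α ℂ)
    (f g : α → ℂ) : qInner (U *ᵥ f) (U *ᵥ g) = qInner f g := by
  have hUU : Uᴴ * U = 1 := Matrix.mem_unitaryGroup_iff'.mp hU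
  rw [qInner_eq_dotProduct, Matrix.star_mulVec, Matrix.dotProduct_mulVec, Matrix.vecMul_vecMul,
    hUU, Matrix.vecMul_one, qInner_eq_dotProduct]

lemma qInner_tensVec_tensVec (f f' : α → ℂ) (g g' : β → ℂ) :
    qInner (tensVec f g) (tensVec f' g') = qInner f f' * qInner g g' := by
  simp only [qInner, tensVec, Fintype.sum_prod_type, Finset.sum_mul_sum, map_mul,
    mul_mul_mul_comm]

lemma qInner_sum_tensVec_of_orthonormal {κ : Type*} [Fintype κ] [DecidableEq κ] {b : κ → β → ℂ}
    (hb : ∀ k l, qInner (b k) (b l) = if k = l then 1 else 0) (f g : κ → α → ℂ) :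
    qInner (∑ k, tensVec (f k) (b k)) (∑ k, tensVec (g k) (b k)) = ∑ k, qInner (f k) (g k) := by
  simp only [qInner_sum_sum, qInner_tensVec_tensVec, hb, mul_ite, mul_one, mul_zero,
    Finset.sum_ite_eq, Finset.mem_univ, if_true]

end InnerProduct

lemma kronecker_mulVec_tensVec {α α' β β' : Type*} [Fintype α'] [Fintype β']
    (A : Matrix α α' ℂ) (B : Matrix β β' ℂ) (f : α' → ℂ) (g : β' → ℂ) :
    (A ⊗ₖ B) *ᵥ tensVec f g = tensVec (A *ᵥ f) (B *ᵥ g) := by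
  funext ⟨i, j⟩
  simp only [Matrix.mulVec, dotProduct, tensVec, Matrix.kroneckerMap_apply, Fintype.sum_prod_type,
    Finset.sum_mul_sum, mul_mul_mul_comm]

section Pauli

variable {N : ℕ}

lemma bvXor_right_inj {x r r' : BV N} : bvXor x r = bvXor x r' ↔ r = r' := by
  simp only [funext_iff, bvXor, Bool.xor_right_inj]

lemma star_bSign (s x : BV N) : star (bSign s x) = bSign s x := by
  simp only [bSign, star_pow, star_neg, star_one]

lemma bSign_eq_prod (s x : BV N) :
    bSign s x = ∏ i, if s i = true ∧ x i = true then (-1 : ℂ) else 1 := by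
  rw [Finset.prod_ite, Finset.prod_const, Finset.prod_const_one, mul_one, bSign]

lemma sum_bSign_mul_bSign (s s' : BV N) :
    ∑ x, bSign s x * bSign s' x = if s = s' then (2 : ℂ) ^ N else 0 := by
  let χ (a b : Bool) : ℂ := if a = true ∧ b = true then -1 else 1
  have sum_χ (a a' : Bool) : ∑ b, χ a b * χ a' b = if a = a' then 2 else 0 := by
    cases a <;> cases a' <;> norm_num [χ]
  calc ∑ x, bSign s x * bSign s' x
      = ∑ x : BV N, ∏ i, χ (s i) (x i) * χ (s' i) (x i) := by
        simp only [bSign_eq_prod, Finset.prod_mul_distrib, χ]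
    _ = ∏ i, ∑ b, χ (s i) b * χ (s' i) b :=
        (Fintype.prod_sum fun i b => χ (s i) b * χ (s' i) b).symm
    _ = if s = s' then (2 : ℂ) ^ N else 0 := by
        simp only [sum_χ, Finset.prod_ite_zero, Finset.mem_univ, forall_const, ← funext_iff,
          Finset.prod_const, Finset.card_univ, Fintype.card_fin]

lemma sigmaX_mul_sigmaZ_apply (r s y x : BV N) :
    (sigmaX r * sigmaZ s) y x = if y = bvXor x r then bSign s x else 0 := by
  simp only [sigmaX, sigmaZ, Matrix.mul_diagonal, Matrix.of_apply, ite_mul, one_mul, zero_mul]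

lemma trace_conjTranspose_mul_sigmaX_mul_sigmaZ (r s r' s' : BV N) :
    ((sigmaX r * sigmaZ s)ᴴ * (sigmaX r' * sigmaZ s')).trace =
      if r = r' ∧ s = s' then (2 : ℂ) ^ N else 0 := by
  have diag_apply (x : BV N) : ((sigmaX r * sigmaZ s)ᴴ * (sigmaX r' * sigmaZ s')) x x =
      if r = r' then bSign s x * bSign s' x else 0 := by
    rw [Matrix.mul_apply]
    simp only [Matrix.conjTranspose_apply, sigmaX_mul_sigmaZ_apply, apply_ite star, star_bSign,
      star_zero, ite_mul, zero_mul, mul_ite, mul_zero, Finset.sum_ite_eq', Finset.mem_univ,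
      if_true, bvXor_right_inj, eq_comm (a := r') (b := r)]
  simp only [Matrix.trace, Matrix.diag_apply, diag_apply]
  by_cases hr : r = r'
  · simp only [hr, if_true, true_and, sum_bSign_mul_bSign]
  · simp only [hr, if_false, false_and, Finset.sum_const_zero]

lemma star_invSqrt2pow_mul_self : star (invSqrt2pow N) * invSqrt2pow N = ((2 : ℂ) ^ N)⁻¹ := by
  rw [invSqrt2pow, Complex.star_def, map_pow, Complex.conj_ofReal, ← mul_pow,
    ← Complex.ofReal_mul, ← mul_inv, Real.mul_self_sqrt zero_le_two, Complex.ofReal_inv,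
    Complex.ofReal_ofNat, inv_pow]

lemma phiPlus_apply (y x : BV N) : phiPlus N (y, x) = if y = x then invSqrt2pow N else 0 := by
  simp [phiPlus, tensVec, eVec]

lemma kronecker_one_mulVec_phiPlus (A : QOp N) (y x : BV N) :
    ((A ⊗ₖ (1 : QOp N)) *ᵥ phiPlus N) (y, x) = invSqrt2pow N * A y x := by
  simp [Matrix.mulVec, dotProduct, Fintype.sum_prod_type, phiPlus_apply, Matrix.one_apply,
    mul_comm]

lemma qInner_kronecker_one_mulVec_phiPlus (A B : QOp N) :
    qInner ((A ⊗ₖ (1 : QOp N)) *ᵥ phiPlus N) ((B ⊗ₖ (1 : QOp N)) *ᵥ phiPlus N) =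
      ((2 : ℂ) ^ N)⁻¹ * (Aᴴ * B).trace := by
  simp only [qInner, Fintype.sum_prod_type_right, kronecker_one_mulVec_phiPlus,
    starRingEnd_apply, star_mul', mul_mul_mul_comm, star_invSqrt2pow_mul_self, ← Finset.mul_sum,
    Matrix.trace, Matrix.diag_apply, Matrix.mul_apply, Matrix.conjTranspose_apply]

/-- The generalised Bell state `(σx(r)σz(s) ⊗ 1) φ⁺_N`, indexed by the pair `(r, s)`. -/
def bellVec (k : BV N × BV N) : BV N × BV N → ℂ :=
  ((sigmaX k.1 * sigmaZ k.2) ⊗ₖ (1 : QOp N)) *ᵥ phiPlus N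

lemma qInner_bellVec_bellVec (k l : BV N × BV N) :
    qInner (bellVec k) (bellVec l) = if k = l then 1 else 0 := by
  simp only [bellVec, qInner_kronecker_one_mulVec_phiPlus,
    trace_conjTranspose_mul_sigmaX_mul_sigmaZ, ← Prod.ext_iff, mul_ite, mul_zero,
    inv_mul_cancel₀ (pow_ne_zero N (two_ne_zero (α := ℂ)))]

end Pauli

section Extraction

variable {N : ℕ} {ι : Type*} [Fintype ι] [DecidableEq ι]

lemma IsBinaryObs.mem_unitaryGroup {O : Matrix ι ι ℂ} (hO : IsBinaryObs O) :
    O ∈ Matrix.unitaryGroup ι ℂ := by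
  rw [Matrix.mem_unitaryGroup_iff, Matrix.star_eq_conjTranspose, hO.1.eq, hO.2]

lemma obsProd_mem_unitaryGroup {X : Fin N → Matrix ι ι ℂ}
    (hXU : ∀ i, X i ∈ Matrix.unitaryGroup ι ℂ) (hX : ∀ i j, Commute (X i) (X j)) (r : BV N) :
    obsProd X hX r ∈ Matrix.unitaryGroup ι ℂ :=
  Submonoid.noncommProd_mem _ _ _ _ fun i _ => hXU i

variable (X Z : Fin N → Matrix ι ι ℂ)
  (hX : ∀ i j, Commute (X i) (X j)) (hZ : ∀ i j, Commute (Z i) (Z j))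

lemma extractedVec_eq_sum_tensVec_bellVec (ψ : ι → ℂ) :
    extractedVec X Z hX hZ ψ = ((2 : ℂ) ^ N)⁻¹ • ∑ k : BV N × BV N,
      tensVec ((obsProd X hX k.1 * obsProd Z hZ k.2) *ᵥ ψ) (bellVec k) := by
  simp only [extractedVec, kronecker_mulVec_tensVec, bellVec, Fintype.sum_prod_type]

lemma qInner_extractedVec_extractedVec
    (hXU : ∀ i, X i ∈ Matrix.unitaryGroup ι ℂ) (hZU : ∀ i, Z i ∈ Matrix.unitaryGroup ι ℂ)
    (ψ χ : ι → ℂ) :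
    qInner (extractedVec X Z hX hZ ψ) (extractedVec X Z hX hZ χ) = qInner ψ χ := by
  have hU (k : BV N × BV N) : obsProd X hX k.1 * obsProd Z hZ k.2 ∈ Matrix.unitaryGroup ι ℂ :=
    mul_mem (obsProd_mem_unitaryGroup hXU hX k.1) (obsProd_mem_unitaryGroup hZU hZ k.2)
  have card_pairs : (Fintype.card (BV N × BV N) : ℂ) = 2 ^ N * 2 ^ N := by
    simp only [Fintype.card_prod, Fintype.card_fun, Fintype.card_bool, Fintype.card_fin,
      Nat.cast_mul, Nat.cast_pow, Nat.cast_ofNat]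
  have star_scalar : star ((2 : ℂ) ^ N)⁻¹ = (2 ^ N)⁻¹ := by
    simp only [star_inv₀, star_pow, star_ofNat]
  rw [extractedVec_eq_sum_tensVec_bellVec, extractedVec_eq_sum_tensVec_bellVec, qInner_smul_smul,
    qInner_sum_tensVec_of_orthonormal qInner_bellVec_bellVec]
  simp only [qInner_mulVec_mulVec (hU _), Finset.sum_const, Finset.card_univ, nsmul_eq_mul,
    card_pairs, star_scalar]
  field_simp

theorem extractedVec_norm_general
    (hXU : ∀ i, X i ∈ Matrix.unitaryGroup ι ℂ) (hZU : ∀ i, Z i ∈ Matrix.unitaryGroup ι ℂ)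
    (ψ : ι → ℂ) :
    qNorm (extractedVec X Z hX hZ ψ) = qNorm ψ := by
  rw [qNorm, qInner_extractedVec_extractedVec X Z hX hZ hXU hZU, qNorm]

end Extraction

/-- the extraction map preserves norms: `‖Φ‖ = ‖ψ‖`. -/
theorem extractedVec_norm {N : ℕ} {ι : Type*} [Fintype ι] [DecidableEq ι]
    (X Z : Fin N → Matrix ι ι ℂ)
    (hXobs : ∀ i, IsBinaryObs (X i)) (hZobs : ∀ i, IsBinaryObs (Z i))
    (hX : ∀ i j, Commute (X i) (X j)) (hZ : ∀ i j, Commute (Z i) (Z j))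
    (ψ : ι → ℂ) :
    qNorm (extractedVec X Z hX hZ ψ) = qNorm ψ :=
  extractedVec_norm_general X Z hX hZ (fun i => (hXobs i).mem_unitaryGroup)
    (fun i => (hZobs i).mem_unitaryGroup) ψ

end
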